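/- Let H = C₀⁻¹ be the inverse of the Coxeter–Schläfli matrix of [5,3,3,3,3]. Then H[4][4] < 0, H[5][5] > 0 and H[4][5] ≠ 0 (geometrically: the vertex A₄ of the orthoscheme is a proper point of H⁵ while A₅ is an outer point). Consequently the quotient (H[4][4]·H[5][5] − H[4][5]²)/(H[4][4]·H[5][5]) is strictly greater than 1. -/

import Mathlib

open Real Matrix

/-- The Coxeter–Schläfli matrix of the compact Coxeter orthoscheme `[5,3,3,3,3]`. -/
noncomputable def C0 : Matrix (Fin 6) (Fin 6) ℝ :=
  !![1, -Real.cos (π/5), 0, 0, 0, 0;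
     -Real.cos (π/5), 1, -(1/2), 0, 0, 0;
     0, -(1/2), 1, -(1/2), 0, 0;
     0, 0, -(1/2), 1, -(1/2), 0;
     0, 0, 0, -(1/2), 1, -(1/2);
     0, 0, 0, 0, -(1/2), 1]

/-!
The matrix `C0` is tridiagonal. Deleting one of the last two rows and one of the last two columns of
a tridiagonal matrix of order `n + 2` leaves a minor which, up to an elementary factor, is a leading
principal minor of order `n` or `n + 1`, and leading principal minors obey a three-term recurrence.
For a linear diagram `[p,3,…,3]` with `n + 1` nodes the recurrence solves to
`(n + 1 - 2 n cos² (π/p)) / 2 ^ n`. For `p = 5` the bounds `5/8 < cos² (π/5) < 2/3` make this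
positive for four nodes (the finite group `H₄`) and negative for five or six.
-/

theorem det_eq_mul_det_submatrix_castSucc {R : Type*} [CommRing R] {n : ℕ}
    (M : Matrix (Fin (n + 1)) (Fin (n + 1)) R)
    (hM : ∀ i : Fin n, M i.castSucc (Fin.last n) = 0) :
    M.det = M (Fin.last n) (Fin.last n) * (M.submatrix Fin.castSucc Fin.castSucc).det := by
  rw [det_succ_column M (Fin.last n), Fin.sum_univ_castSucc]
  simp [hM, Fin.succAbove_last]

theorem inv_apply_eq_adjugate_div_det {K m : Type*} [Field K] [Fintype m] [DecidableEq m]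
    (A : Matrix m m K) (i j : m) : A⁻¹ i j = A.adjugate i j / A.det := by
  rw [Matrix.inv_def, Matrix.smul_apply, Ring.inverse_eq_inv', smul_eq_mul, div_eq_inv_mul]

theorem one_lt_mul_sub_sq_div_mul {K : Type*} [Field K] [LinearOrder K] [IsStrictOrderedRing K]
    {x y z : K} (hxy : x * y < 0) (hz : z ≠ 0) : 1 < (x * y - z ^ 2) / (x * y) := by
  rw [one_lt_div_of_neg hxy]
  exact sub_lt_self _ (sq_pos_of_ne_zero hz)

/-- The symmetric tridiagonal (Jacobi) `n × n` matrix with diagonal `a 0, …, a (n - 1)` and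
off-diagonal entries `b 0, …, b (n - 2)`. The coefficients are sequences on `ℕ`, so that the leading
principal submatrices of a Jacobi matrix are the Jacobi matrices of the same sequences. -/
def jacobiMatrix {R : Type*} [Zero R] (a b : ℕ → R) (n : ℕ) : Matrix (Fin n) (Fin n) R :=
  of fun i j =>
    if (i : ℕ) = j then a i else if (i : ℕ) + 1 = j then b i else if (j : ℕ) + 1 = i then b j else 0

namespace jacobiMatrix

theorem submatrix_castSucc {R : Type*} [Zero R] (a b : ℕ → R) (n : ℕ) :
    (jacobiMatrix a b (n + 1)).submatrix Fin.castSucc Fin.castSucc = jacobiMatrix a b n :=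
  rfl

theorem isSymm {R : Type*} [Zero R] (a b : ℕ → R) (n : ℕ) : (jacobiMatrix a b n).IsSymm := by
  ext i j
  simp only [transpose_apply, jacobiMatrix, of_apply]
  grind

theorem apply_castSucc_castSucc_last {R : Type*} [Zero R] (a b : ℕ → R) {n : ℕ} (i : Fin n) :
    jacobiMatrix a b (n + 2) i.castSucc.castSucc (Fin.last (n + 1)) = 0 := by
  simp only [jacobiMatrix, of_apply, Fin.val_castSucc, Fin.val_last]
  grind

section CommRing

variable {R : Type*} [CommRing R] (a b : ℕ → R) (n : ℕ)

theorem adjugate_last_last :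
    (jacobiMatrix a b (n + 1)).adjugate (Fin.last n) (Fin.last n) = (jacobiMatrix a b n).det := by
  rw [adjugate_fin_succ_eq_det_submatrix, Fin.succAbove_last, submatrix_castSucc]
  simp [← two_mul]

theorem adjugate_castSucc_last_castSucc_last :
    (jacobiMatrix a b (n + 2)).adjugate (Fin.last n).castSucc (Fin.last n).castSucc =
      a (n + 1) * (jacobiMatrix a b n).det := by
  rw [adjugate_fin_succ_eq_det_submatrix, det_eq_mul_det_submatrix_castSucc]
  · have hminor : (((jacobiMatrix a b (n + 2)).submatrix (Fin.last n).castSucc.succAbove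
        (Fin.last n).castSucc.succAbove).submatrix Fin.castSucc Fin.castSucc) =
          jacobiMatrix a b n := by
      ext i j
      simp [jacobiMatrix]
    rw [hminor]
    simp [jacobiMatrix, ← two_mul]
  · intro i
    simpa using apply_castSucc_castSucc_last a b i

theorem adjugate_castSucc_last_last :
    (jacobiMatrix a b (n + 2)).adjugate (Fin.last n).castSucc (Fin.last (n + 1)) =
      -b n * (jacobiMatrix a b n).det := by
  rw [adjugate_fin_succ_eq_det_submatrix, det_eq_mul_det_submatrix_castSucc]
  · have hminor : (((jacobiMatrix a b (n + 2)).submatrix (Fin.last (n + 1)).succAbove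
        (Fin.last n).castSucc.succAbove).submatrix Fin.castSucc Fin.castSucc) =
          jacobiMatrix a b n := by
      ext i j
      simp [jacobiMatrix]
    have hsign : (-1 : R) ^ (n + 1 + n) = -1 := Odd.neg_one_pow ⟨n, by ring⟩
    rw [hminor]
    simp [jacobiMatrix, hsign]
  · intro i
    simpa using apply_castSucc_castSucc_last a b i

theorem det_add_two :
    (jacobiMatrix a b (n + 2)).det =
      a (n + 1) * (jacobiMatrix a b (n + 1)).det - b n ^ 2 * (jacobiMatrix a b n).det := by
  have hrow (j : Fin n) :
      jacobiMatrix a b (n + 2) (Fin.last (n + 1)) j.castSucc.castSucc = 0 :=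
    ((isSymm a b (n + 2)).apply _ _).trans (apply_castSucc_castSucc_last a b j)
  have hpen : jacobiMatrix a b (n + 2) (Fin.last (n + 1)) (Fin.last n).castSucc = b n := by
    rw [(isSymm a b (n + 2)).apply]
    simp [jacobiMatrix]
  have hlast : jacobiMatrix a b (n + 2) (Fin.last (n + 1)) (Fin.last (n + 1)) = a (n + 1) := by
    simp [jacobiMatrix]
  rw [det_eq_sum_mul_adjugate_row _ (Fin.last (n + 1)), Fin.sum_univ_castSucc,
    Fin.sum_univ_castSucc, adjugate_last_last, adjugate_castSucc_last_last, hpen, hlast]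
  simp only [hrow, zero_mul, Finset.sum_const_zero]
  ring

end CommRing

section Field

variable {K : Type*} [Field K] (a b : ℕ → K) (n : ℕ)

theorem inv_last_last :
    (jacobiMatrix a b (n + 1))⁻¹ (Fin.last n) (Fin.last n) =
      (jacobiMatrix a b n).det / (jacobiMatrix a b (n + 1)).det := by
  rw [inv_apply_eq_adjugate_div_det, adjugate_last_last]

theorem inv_castSucc_last_castSucc_last :
    (jacobiMatrix a b (n + 2))⁻¹ (Fin.last n).castSucc (Fin.last n).castSucc =
      a (n + 1) * (jacobiMatrix a b n).det / (jacobiMatrix a b (n + 2)).det := by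
  rw [inv_apply_eq_adjugate_div_det, adjugate_castSucc_last_castSucc_last]

theorem inv_castSucc_last_last :
    (jacobiMatrix a b (n + 2))⁻¹ (Fin.last n).castSucc (Fin.last (n + 1)) =
      -b n * (jacobiMatrix a b n).det / (jacobiMatrix a b (n + 2)).det := by
  rw [inv_apply_eq_adjugate_div_det, adjugate_castSucc_last_last]

end Field

end jacobiMatrix

/-- The off-diagonal entries of the Coxeter–Schläfli matrix of a linear diagram `[p,3,…,3]`, where
`c` stands for `cos (π / p)` and `1 / 2` is `cos (π / 3)`. -/
def schlafliOffDiag {K : Type*} [Field K] (c : K) (i : ℕ) : K :=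
  if i = 0 then -c else -(1 / 2)

/-- The Coxeter–Schläfli matrix of the linear diagram `[p,3,…,3]` with `n` nodes, where `c` stands
for `cos (π / p)`. -/
def schlafliMatrix {K : Type*} [Field K] (c : K) (n : ℕ) : Matrix (Fin n) (Fin n) K :=
  jacobiMatrix 1 (schlafliOffDiag c) n

theorem det_schlafliMatrix_succ {K : Type*} [Field K] [NeZero (2 : K)] (c : K) :
    ∀ n : ℕ, (schlafliMatrix c (n + 1)).det = (n + 1 - 2 * n * c ^ 2) / 2 ^ n
  | 0 => by simp [schlafliMatrix, jacobiMatrix]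
  | 1 => by
    have h2 : (2 : K) ≠ 0 := two_ne_zero
    have hdet : (schlafliMatrix c 2).det = 1 - c ^ 2 := by
      simp [schlafliMatrix, schlafliOffDiag, jacobiMatrix, det_fin_two, sq]
    rw [hdet]
    push_cast
    field_simp
    ring
  | n + 2 => by
    have h2 : (2 : K) ≠ 0 := two_ne_zero
    have hrec : (schlafliMatrix c (n + 3)).det =
        (schlafliMatrix c (n + 2)).det - (1 / 2) ^ 2 * (schlafliMatrix c (n + 1)).det := by
      simpa [schlafliMatrix, schlafliOffDiag] using
        jacobiMatrix.det_add_two 1 (schlafliOffDiag c) (n + 1)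
    rw [hrec, det_schlafliMatrix_succ c n, det_schlafliMatrix_succ c (n + 1)]
    push_cast
    field_simp
    ring

theorem C0_eq_schlafliMatrix : C0 = schlafliMatrix (cos (π / 5)) 6 := by
  ext i j
  fin_cases i <;> fin_cases j <;> simp [C0, schlafliMatrix, schlafliOffDiag, jacobiMatrix]

theorem cos_sq_pi_div_five : cos (π / 5) ^ 2 = (3 + √5) / 8 := by
  have h5 : √5 ^ 2 = 5 := sq_sqrt (by norm_num)
  rw [cos_pi_div_five]
  linear_combination h5 / 16

theorem five_eighths_lt_cos_sq_pi_div_five : 5 / 8 < cos (π / 5) ^ 2 := by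
  have h : 2 < √5 := lt_sqrt_of_sq_lt (by norm_num)
  rw [cos_sq_pi_div_five]
  linarith

theorem cos_sq_pi_div_five_lt_two_thirds : cos (π / 5) ^ 2 < 2 / 3 := by
  have h : √5 < 7 / 3 := (sqrt_lt' (by norm_num)).2 (by norm_num)
  rw [cos_sq_pi_div_five]
  linarith

theorem det_schlafliMatrix_four_pos : 0 < (schlafliMatrix (cos (π / 5)) 4).det := by
  rw [det_schlafliMatrix_succ]
  exact div_pos (by push_cast; linarith [cos_sq_pi_div_five_lt_two_thirds]) (by positivity)

theorem det_schlafliMatrix_five_neg : (schlafliMatrix (cos (π / 5)) 5).det < 0 := by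
  rw [det_schlafliMatrix_succ]
  exact div_neg_of_neg_of_pos (by push_cast; linarith [five_eighths_lt_cos_sq_pi_div_five])
    (by positivity)

theorem det_schlafliMatrix_six_neg : (schlafliMatrix (cos (π / 5)) 6).det < 0 := by
  rw [det_schlafliMatrix_succ]
  exact div_neg_of_neg_of_pos (by push_cast; linarith [five_eighths_lt_cos_sq_pi_div_five])
    (by positivity)

theorem stmt2 :
    C0⁻¹ 4 4 < 0 ∧ 0 < C0⁻¹ 5 5 ∧ C0⁻¹ 4 5 ≠ 0 ∧
    1 < (C0⁻¹ 4 4 * C0⁻¹ 5 5 - (C0⁻¹ 4 5)^2) / (C0⁻¹ 4 4 * C0⁻¹ 5 5) := by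
  have h4 := det_schlafliMatrix_four_pos
  have h5 := det_schlafliMatrix_five_neg
  have h6 := det_schlafliMatrix_six_neg
  have h44 : C0⁻¹ 4 4 < 0 := by
    rw [C0_eq_schlafliMatrix]
    refine (jacobiMatrix.inv_castSucc_last_castSucc_last _ _ 4).trans_lt ?_
    exact div_neg_of_pos_of_neg (mul_pos one_pos h4) h6
  have h55 : 0 < C0⁻¹ 5 5 := by
    rw [C0_eq_schlafliMatrix]
    exact (div_pos_of_neg_of_neg h5 h6).trans_eq (jacobiMatrix.inv_last_last _ _ 5).symm
  have h45 : C0⁻¹ 4 5 ≠ 0 := by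
    rw [C0_eq_schlafliMatrix]
    refine (jacobiMatrix.inv_castSucc_last_last _ _ 4).trans_ne ?_
    exact div_ne_zero (mul_ne_zero (by norm_num [schlafliOffDiag]) h4.ne') h6.ne
  exact ⟨h44, h55, h45, one_lt_mul_sub_sq_div_mul (mul_neg_of_neg_of_pos h44 h55) h45⟩
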